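/- (Lemma 3.2) Under the assumptions of Lemma 3.1 (F real-analytic, 𝒯 = F ∘ · maps GX into GX, is an involution on GX, and has fixed point set exactly GY), write F₁ᵢ(X, Y, Z) = pᵢ Xᵢ + pᵢ' Zᵢ and F₃ᵢ(X, Y, Z) = qᵢ Xᵢ + qᵢ' Zᵢ. Then for every i ∈ {1, …, n} the following six equations hold: (1) pᵢ + pᵢ' = 1; (2) qᵢ + qᵢ' = 1; (3) pᵢ² + pᵢ'qᵢ = 1; (4) pᵢpᵢ' + pᵢ'qᵢ' = 0; (5) qᵢpᵢ + qᵢ'qᵢ = 0; (6) qᵢpᵢ' + qᵢ'² = 1. -/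

import Mathlib

open scoped BigOperators

/-- Triples `(θ, a, b)` encoding maps `ℝⁿ → ℝ^{2n+1}`. -/
abbrev TripleMap (n : ℕ) :=
  ((Fin n → ℝ) → Fin n → ℝ) × ((Fin n → ℝ) → ℝ) × ((Fin n → ℝ) → Fin n → ℝ)

/-- All three components are `C^∞`. -/
def SmoothTriple (n : ℕ) (Φ : TripleMap n) : Prop :=
  ContDiff ℝ (⊤ : ℕ∞) Φ.1 ∧ ContDiff ℝ (⊤ : ℕ∞) Φ.2.1 ∧ ContDiff ℝ (⊤ : ℕ∞) Φ.2.2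

/-- The creative condition (*): `da = ∑ᵢ bᵢ dθᵢ`. -/
def Creative (n : ℕ) (Φ : TripleMap n) : Prop :=
  ∀ x v : Fin n → ℝ,
    fderiv ℝ Φ.2.1 x v = ∑ i, Φ.2.2 x i * fderiv ℝ (fun y => Φ.1 y i) x v

/-- `RegPts f` is the set of regular points of `f : ℝⁿ → ℝⁿ`, i.e. points where
the differential is invertible. -/
def RegPts (n : ℕ) (f : (Fin n → ℝ) → Fin n → ℝ) : Set (Fin n → ℝ) :=
  {x | Function.Bijective (fderiv ℝ f x)}

/-- `X`: smooth triples satisfying the creative condition. -/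
def Xset (n : ℕ) : Set (TripleMap n) := {Φ | SmoothTriple n Φ ∧ Creative n Φ}

/-- `GX`: elements of `X` such that `Reg θ` and `Reg b` are dense. -/
def GXset (n : ℕ) : Set (TripleMap n) :=
  {Φ | SmoothTriple n Φ ∧ Creative n Φ ∧ Dense (RegPts n Φ.1) ∧ Dense (RegPts n Φ.2.2)}

/-- `Y`: triples of the form `(θ, ½∑θᵢ², θ)` with `θ` smooth. -/
def Yset (n : ℕ) : Set (TripleMap n) :=
  {Φ | ∃ θ : (Fin n → ℝ) → Fin n → ℝ, ContDiff ℝ (⊤ : ℕ∞) θ ∧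
    Φ = (θ, fun x => (1 / 2) * ∑ i, θ x i ^ 2, θ)}

/-- `GY`: triples of the form `(θ, ½∑θᵢ², θ)` with `θ` smooth and `Reg θ` dense. -/
def GYset (n : ℕ) : Set (TripleMap n) :=
  {Φ | ∃ θ : (Fin n → ℝ) → Fin n → ℝ, ContDiff ℝ (⊤ : ℕ∞) θ ∧ Dense (RegPts n θ) ∧
    Φ = (θ, fun x => (1 / 2) * ∑ i, θ x i ^ 2, θ)}

/-- The Legendre involution `L(θ, a, b) = (b, ∑ᵢ bᵢθᵢ − a, θ)`. -/
def Legendre (n : ℕ) (Φ : TripleMap n) : TripleMap n :=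
  (Φ.2.2, fun x => (∑ i, Φ.2.2 x i * Φ.1 x i) - Φ.2.1 x, Φ.1)

/-- Packing a triple `(θ, a, b)` into a single map `ℝⁿ → ℝ^{2n+1}`
(realized as `ℝⁿ × ℝ × ℝⁿ`). -/
def packTriple (n : ℕ) (Φ : TripleMap n) : (Fin n → ℝ) → (Fin n → ℝ) × ℝ × (Fin n → ℝ) :=
  fun x => (Φ.1 x, Φ.2.1 x, Φ.2.2 x)

/-- Unpacking a map `ℝⁿ → ℝ^{2n+1}` into a triple `(θ, a, b)`. -/
def unpackTriple (n : ℕ) (Ψ : (Fin n → ℝ) → (Fin n → ℝ) × ℝ × (Fin n → ℝ)) : TripleMap n :=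
  (fun x => (Ψ x).1, fun x => (Ψ x).2.1, fun x => (Ψ x).2.2)

/-- The differential of a nonzero homothety of `ℝⁿ` is invertible everywhere. -/
lemma regPts_smul (n : ℕ) {c : ℝ} (hc : c ≠ 0) :
    RegPts n (fun x => c • x) = Set.univ := by
  refine Set.eq_univ_of_forall fun x => ?_
  have h : fderiv ℝ (fun x : Fin n → ℝ => c • x) x = c • ContinuousLinearMap.id ℝ _ :=
    ((hasFDerivAt_id x).const_smul c).fderiv
  simp only [RegPts, Set.mem_ofPred_eq, h]
  exact MulAction.bijective₀ hc

/-- The triple `(x, (c / 2) ∑ xᵢ², c x)`. -/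
noncomputable def quadraticTriple (n : ℕ) (c : ℝ) : TripleMap n :=
  (fun x => x, fun x => (c / 2) * ∑ i, x i ^ 2, fun x => c • x)

lemma quadraticTriple_mem_GXset (n : ℕ) {c : ℝ} (hc : c ≠ 0) :
    quadraticTriple n c ∈ GXset n := by
  refine ⟨⟨contDiff_id, ?_, contDiff_id.const_smul c⟩, ?_, ?_, ?_⟩
  · simp only [quadraticTriple]
    fun_prop
  · intro x v
    have hproj (i : Fin n) : HasFDerivAt (fun y : Fin n → ℝ => y i)
        (ContinuousLinearMap.proj (R := ℝ) (φ := fun _ : Fin n => ℝ) i) x :=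
      hasFDerivAt_apply i x
    have hsum := (HasFDerivAt.fun_sum (u := Finset.univ)
      fun i _ => (hproj i).pow 2).const_mul (c / 2)
    simp only [quadraticTriple, hsum.fderiv, (hproj _).fderiv]
    simp only [FunLike.coe_smul, FunLike.coe_sum, Pi.smul_apply, Finset.sum_apply,
      Finset.mul_sum, smul_eq_mul, ContinuousLinearMap.proj_apply, nsmul_eq_mul]
    refine Finset.sum_congr rfl fun i _ => ?_
    push_cast
    ring
  · have h := regPts_smul n one_ne_zero
    simp only [one_smul] at h
    simp [quadraticTriple, h]
  · simp [quadraticTriple, regPts_smul n hc]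

lemma quadraticTriple_one_mem_GYset (n : ℕ) : quadraticTriple n 1 ∈ GYset n := by
  refine ⟨fun x => x, contDiff_id, (quadraticTriple_mem_GXset n one_ne_zero).2.2.1, ?_⟩
  simp [quadraticTriple]

/-- **Lemma 3.2**: under the assumptions of Lemma 3.1, if
`F₁ᵢ(X, Y, Z) = pᵢXᵢ + pᵢ'Zᵢ` and `F₃ᵢ(X, Y, Z) = qᵢXᵢ + qᵢ'Zᵢ`, then for every `i`
the six equations
(1) `pᵢ + pᵢ' = 1`, (2) `qᵢ + qᵢ' = 1`, (3) `pᵢ² + pᵢ'qᵢ = 1`, (4) `pᵢpᵢ' + pᵢ'qᵢ' = 0`,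
(5) `qᵢpᵢ + qᵢ'qᵢ = 0`, (6) `qᵢpᵢ' + qᵢ'² = 1` hold. -/
theorem lemma_3_2 (n : ℕ) (hn : 1 ≤ n)
    (F : (Fin n → ℝ) × ℝ × (Fin n → ℝ) → (Fin n → ℝ) × ℝ × (Fin n → ℝ))
    (hF : AnalyticOnNhd ℝ F Set.univ)
    (T : TripleMap n → TripleMap n)
    (hTF : ∀ Φ ∈ GXset n, T Φ = unpackTriple n (F ∘ packTriple n Φ))
    (hmap : ∀ Φ ∈ GXset n, T Φ ∈ GXset n)
    (hinv : ∀ Φ ∈ GXset n, T (T Φ) = Φ)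
    (hfix : ∀ Φ ∈ GXset n, (Φ ∈ GYset n → T Φ = Φ) ∧ (Φ ∉ GYset n → T Φ ≠ Φ))
    (p p' q q' : Fin n → ℝ)
    (hF1 : ∀ i : Fin n, ∀ w : (Fin n → ℝ) × ℝ × (Fin n → ℝ),
      (F w).1 i = p i * w.1 i + p' i * w.2.2 i)
    (hF3 : ∀ i : Fin n, ∀ w : (Fin n → ℝ) × ℝ × (Fin n → ℝ),
      (F w).2.2 i = q i * w.1 i + q' i * w.2.2 i) :
    ∀ i : Fin n,
      p i + p' i = 1 ∧
      q i + q' i = 1 ∧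
      (p i) ^ 2 + p' i * q i = 1 ∧
      p i * p' i + p' i * q' i = 0 ∧
      q i * p i + q' i * q i = 0 ∧
      q i * p' i + (q' i) ^ 2 = 1 := by
  intro i
  have hT1 (Φ) (hΦ : Φ ∈ GXset n) (x) : (T Φ).1 x i = p i * Φ.1 x i + p' i * Φ.2.2 x i := by
    rw [hTF Φ hΦ]
    exact hF1 i _
  have hT3 (Φ) (hΦ : Φ ∈ GXset n) (x) : (T Φ).2.2 x i = q i * Φ.1 x i + q' i * Φ.2.2 x i := by
    rw [hTF Φ hΦ]
    exact hF3 i _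
  have hsq (c : ℝ) (hc : c ≠ 0) :
      p i * (p i + p' i * c) + p' i * (q i + q' i * c) = 1 ∧
      q i * (p i + p' i * c) + q' i * (q i + q' i * c) = c := by
    have hΦ := quadraticTriple_mem_GXset n hc
    have h1 := hT1 _ (hmap _ hΦ) 1
    have h3 := hT3 _ (hmap _ hΦ) 1
    rw [hinv _ hΦ, hT1 _ hΦ, hT3 _ hΦ] at h1 h3
    simp only [quadraticTriple, Pi.smul_apply, Pi.one_apply, smul_eq_mul, mul_one] at h1 h3
    exact ⟨h1.symm, h3.symm⟩
  have hΦ := quadraticTriple_mem_GXset n one_ne_zero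
  have hfixed := (hfix _ hΦ).1 (quadraticTriple_one_mem_GYset n)
  have h1 := hT1 _ hΦ 1
  have h3 := hT3 _ hΦ 1
  rw [hfixed] at h1 h3
  simp only [quadraticTriple, Pi.smul_apply, Pi.one_apply, smul_eq_mul, mul_one] at h1 h3
  obtain ⟨h11, h13⟩ := hsq 1 one_ne_zero
  obtain ⟨h21, h23⟩ := hsq 2 two_ne_zero
  refine ⟨?_, ?_, ?_, ?_, ?_, ?_⟩ <;> linarith
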